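/- Let 0<c₁<⋯<c_m be non-integer reals and let (ξ₁,…,ξ_m)∈[−1/2,1/2)^m. Then lim_{N→∞} (1/N) ∑_{n=1}^{N} e(ξ₁⌊n^{c₁}⌋+⋯+ξ_m⌊n^{c_m}⌋) equals 1 if ξ₁=⋯=ξ_m=0, and equals 0 otherwise. -/

import Mathlib

/-!
The argument rests on Weyl's theorem for generalized polynomials: if `η₁, …, η_m` are real and not
all zero, then `e(η₁ n^{c₁} + ⋯ + η_m n^{c_m})` has mean zero (`meanZero_eC_sum_rpow`). The phase is
`PowerLike`: it grows like `L n^c` together with its iterated differences, where `c` is the largest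
exponent that occurs and `L ≠ 0`. By van der Corput's difference theorem
(`meanZero_of_meanZero_inner_comp_add`) it suffices to treat the differences `u (· + h) - u`, which
have exponent `c - 1`; since `c` is not an integer the leading constant stays nonzero, and one
descends to `0 < c < 1`. There the increments of `u` tend to zero slowly and regularly, and
summation by parts (`meanZero_mul_fwdDiff`) concludes.

The floors are removed one index at a time (`meanZero_eC_mul_floor`). With `x = n^{c_i}` one has
`e(ξ⌊x⌋) = e(ξx) e(-ξ{x})`, and the `1`-periodic function `e(-ξ{x})` is approximated in mean by
trigonometric polynomials, a Fejér kernel absorbing its jump at the integers. Thus the sum is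
approximated by combinations of `e(∑ (ξ_i + k_i) n^{c_i})` with integers `k_i`. If some `ξ_i` is not
an integer, then `ξ_i + k_i ≠ 0` and each of these has mean zero; if all `ξ_i` are integers, every
term of the original sum is `1`.
-/

open MeasureTheory Filter Finset
open scoped ENNReal NNReal

noncomputable section

/-- `e(x) = e^{2πix}`. -/
def eC (x : ℝ) : ℂ := Complex.exp (2 * Real.pi * Complex.I * x)

/-- The exponential sum `(1/N) ∑_{n=1}^{N} e(ξ₁⌊n^{c₁}⌋ + ⋯ + ξ_m⌊n^{c_m}⌋)`. -/
def expSum (m : ℕ) (c : Fin m → ℝ) (ξ : Fin m → ℝ) (N : ℕ) : ℂ :=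
  (N : ℂ)⁻¹ * ∑ n ∈ Finset.Icc 1 N, eC (∑ i, ξ i * (⌊(n : ℝ) ^ c i⌋ : ℝ))

open Asymptotics Topology
open scoped fwdDiff InnerProductSpace FourierTransform

/-! ### Sequences of mean zero -/

section MeanZero

variable {E F : Type*} [NormedAddCommGroup E] [NormedAddCommGroup F] {f g : ℕ → E}

lemma isLittleO_const_natCast (x : E) : (fun _ : ℕ ↦ x) =o[atTop] (fun N ↦ (N : ℝ)) :=
  (isLittleO_const_id_atTop x).natCast_atTop

/-- The sequence `f` has mean zero: its partial sums over `n < N` are `o(N)`. -/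
def MeanZero (f : ℕ → E) : Prop :=
  (fun N ↦ ∑ n ∈ range N, f n) =o[atTop] (fun N ↦ (N : ℝ))

lemma meanZero_iff :
    MeanZero f ↔ ∀ ⦃ε : ℝ⦄, 0 < ε → ∀ᶠ N : ℕ in atTop, ‖∑ n ∈ range N, f n‖ ≤ ε * N := by
  simp [MeanZero, isLittleO_iff]

lemma meanZero_of_tendsto_zero (hf : Tendsto f atTop (𝓝 0)) : MeanZero f :=
  isLittleO_sum_range_of_tendsto_zero hf

namespace MeanZero

lemma add (hf : MeanZero f) (hg : MeanZero g) : MeanZero fun n ↦ f n + g n := by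
  simpa only [MeanZero, sum_add_distrib] using IsLittleO.add hf hg

lemma sum {ι : Type*} {s : Finset ι} {f : ι → ℕ → E} (hf : ∀ i ∈ s, MeanZero (f i)) :
    MeanZero fun n ↦ ∑ i ∈ s, f i n := by
  simpa only [MeanZero, sum_comm (s := range _)] using IsLittleO.fun_sum hf

lemma map [NormedSpace ℝ E] [NormedSpace ℝ F] (hf : MeanZero f) (T : E →L[ℝ] F) :
    MeanZero fun n ↦ T (f n) := by
  simpa only [MeanZero, ← map_sum] using (T.isBigO_comp _ _).trans_isLittleO hf

lemma const_mul {f : ℕ → ℂ} (hf : MeanZero f) (a : ℂ) : MeanZero fun n ↦ a * f n :=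
  hf.map (ContinuousLinearMap.mul ℝ ℂ a)

lemma congr' (hf : MeanZero f) (h : f =ᶠ[atTop] g) : MeanZero g := by
  have hsub : Tendsto (fun n ↦ g n - f n) atTop (𝓝 0) :=
    tendsto_const_nhds.congr' <| h.mono fun n hn ↦ (sub_eq_zero.2 hn.symm).symm
  simpa only [add_sub_cancel] using hf.add (meanZero_of_tendsto_zero hsub)

lemma comp_add (hf : MeanZero f) (h : ℕ) : MeanZero fun n ↦ f (n + h) := by
  have hshift : (fun N ↦ ∑ n ∈ range (N + h), f n) =o[atTop] (fun N ↦ (N : ℝ)) := by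
    refine (hf.comp_tendsto (tendsto_add_atTop_nat h)).trans_isBigO ?_
    simp only [Function.comp_def, Nat.cast_add]
    exact (isBigO_refl _ _).add (isLittleO_const_natCast _).isBigO
  have hconst : (fun _ : ℕ ↦ ∑ n ∈ range h, f n) =o[atTop] (fun N ↦ (N : ℝ)) :=
    isLittleO_const_natCast _
  refine (hshift.sub hconst).congr_left fun N ↦ ?_
  rw [add_comm N h, sum_range_add, add_sub_cancel_left]
  simp only [add_comm h]

end MeanZero

lemma meanZero_of_approx
    (h : ∀ ε > 0, ∃ g, MeanZero g ∧ ∀ᶠ N : ℕ in atTop, ‖∑ n ∈ range N, (f n - g n)‖ ≤ ε * N) :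
    MeanZero f := by
  refine meanZero_iff.2 fun ε hε ↦ ?_
  obtain ⟨g, hg, hfg⟩ := h (ε / 2) (half_pos hε)
  filter_upwards [hfg, meanZero_iff.1 hg (half_pos hε)] with N hfgN hgN
  rw [sum_sub_distrib] at hfgN
  linarith [norm_le_norm_sub_add (∑ n ∈ range N, f n) (∑ n ∈ range N, g n)]

lemma meanZero_fwdDiff {u : ℕ → E} (hu : u =o[atTop] (fun N ↦ (N : ℝ))) : MeanZero (Δ_[1] u) := by
  refine (hu.sub (isLittleO_const_natCast (u 0))).congr_left fun N ↦ ?_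
  exact (sum_range_sub u N).symm

lemma isLittleO_of_tendsto_fwdDiff_zero {u : ℕ → E} (hu : Tendsto (Δ_[1] u) atTop (𝓝 0)) :
    u =o[atTop] (fun N ↦ (N : ℝ)) := by
  refine (IsLittleO.add (meanZero_of_tendsto_zero hu)
    (isLittleO_const_natCast (u 0))).congr_left fun N ↦ ?_
  simp only [fwdDiff, sum_range_sub, sub_add_cancel]

lemma norm_sum_range_le_of_sum_norm_sq_le {f : ℕ → E} {N : ℕ} {B : ℝ} (hB : 0 ≤ B)
    (h : ∑ n ∈ range N, ‖f n‖ ^ 2 ≤ B ^ 2 * N) : ‖∑ n ∈ range N, f n‖ ≤ B * N := by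
  refine (norm_sum_le _ _).trans (abs_le_of_sq_le_sq' ?_ (by positivity)).2
  calc (∑ n ∈ range N, ‖f n‖) ^ 2 ≤ N * ∑ n ∈ range N, ‖f n‖ ^ 2 := by
        simpa using sq_sum_le_card_mul_sum_sq (s := range N) (f := fun n ↦ ‖f n‖)
    _ ≤ N * (B ^ 2 * N) := by gcongr
    _ = (B * N) ^ 2 := by ring

lemma meanZero_comp_add_sub {z : ℕ → E} {C : ℝ} (hz : ∀ n, ‖z n‖ ≤ C) (h : ℕ) :
    MeanZero fun n ↦ z (n + h) - z n := by
  have hz_littleO : z =o[atTop] (fun N ↦ (N : ℝ)) :=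
    (isBigO_of_le' (c := C) _ (by simpa using hz)).trans_isLittleO (isLittleO_const_natCast (1 : ℝ))
  have hsum : MeanZero fun n ↦ ∑ j ∈ range h, Δ_[1] z (n + j) :=
    .sum fun j _ ↦ (meanZero_fwdDiff hz_littleO).comp_add j
  refine hsum.congr' <| .of_forall fun n ↦ ?_
  exact sum_range_sub (fun j ↦ z (n + j)) h

lemma meanZero_mul_fwdDiff {R : Type*} [NormedRing R] {a b : ℕ → R} {C : ℝ}
    (hb : ∀ n, ‖b n‖ ≤ C) (ha : Tendsto (Δ_[1] a) atTop (𝓝 0)) :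
    MeanZero fun n ↦ a n * Δ_[1] b n := by
  have hb_bigO : b =O[atTop] (fun _ ↦ (1 : ℝ)) := isBigO_of_le' (c := C) _ (by simpa using hb)
  have hab : (fun n ↦ a n * b n) =o[atTop] (fun N : ℕ ↦ (N : ℝ)) := by
    simpa using (isLittleO_of_tendsto_fwdDiff_zero ha).mul_isBigO hb_bigO
  have hdiff : Tendsto (fun n ↦ -(Δ_[1] a n * b (n + 1))) atTop (𝓝 0) := by
    have : (fun n ↦ Δ_[1] a n * b (n + 1)) =O[atTop] (Δ_[1] a) := by
      simpa using (isBigO_refl (Δ_[1] a) atTop).norm_right.mul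
        (hb_bigO.comp_tendsto (tendsto_add_atTop_nat 1))
    simpa using (this.trans_tendsto ha).neg
  refine ((meanZero_fwdDiff hab).add (meanZero_of_tendsto_zero hdiff)).congr' (.of_forall ?_)
  intro n
  simp only [fwdDiff]
  noncomm_ring

lemma MeanZero.tendsto_average {f : ℕ → ℂ} (hf : MeanZero f) :
    Tendsto (fun N : ℕ ↦ (N : ℂ)⁻¹ * ∑ n ∈ Icc 1 N, f n) atTop (𝓝 0) := by
  refine ((hf.comp_add 1).tendsto_inv_smul_nhds_zero).congr fun N ↦ ?_
  rw [range_eq_Ico, sum_Ico_add' f 0 N 1, Complex.real_smul]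
  push_cast
  rfl

end MeanZero

/-! ### Van der Corput's difference theorem -/

section VanDerCorput

variable {E : Type*} [NormedAddCommGroup E] [InnerProductSpace ℝ E]

lemma meanZero_norm_sum_sq_sub {ι : Type*} (s : Finset ι) {w : ι → ℕ → E}
    (hw : Pairwise fun h k ↦ MeanZero fun n ↦ ⟪w h n, w k n⟫_ℝ) :
    MeanZero fun n ↦ ‖∑ h ∈ s, w h n‖ ^ 2 - ∑ h ∈ s, ‖w h n‖ ^ 2 := by
  classical
  have hoff : MeanZero fun n ↦ ∑ p ∈ s.offDiag, ⟪w p.1 n, w p.2 n⟫_ℝ :=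
    .sum fun p hp ↦ hw (mem_offDiag.1 hp).2.2
  refine hoff.congr' <| .of_forall fun n ↦ ?_
  simp only [← real_inner_self_eq_norm_sq, sum_inner, inner_sum]
  rw [← sum_product', ← diag_union_offDiag, sum_union (disjoint_diag_offDiag _), sum_diag,
    add_sub_cancel_left]
  exact sum_congr rfl fun p _ ↦ real_inner_comm _ _

lemma eventually_sum_norm_average_sq_le {w : ℕ → ℕ → E} {C : ℝ} (hwC : ∀ h n, ‖w h n‖ ≤ C)
    (hw : Pairwise fun h k ↦ MeanZero fun n ↦ ⟪w h n, w k n⟫_ℝ) {ε : ℝ} (hε : 0 < ε) :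
    ∀ᶠ H : ℕ in atTop, ∀ᶠ N : ℕ in atTop,
      ∑ n ∈ range N, ‖(H : ℝ)⁻¹ • ∑ h ∈ range H, w h n‖ ^ 2 ≤ ε * N := by
  have hlim : Tendsto (fun H : ℕ ↦ (H : ℝ)⁻¹ * ((H : ℝ)⁻¹ + C ^ 2)) atTop (𝓝 0) := by
    have hinv := tendsto_inv_atTop_nhds_zero_nat (𝕜 := ℝ)
    simpa using hinv.mul (hinv.add_const (C ^ 2))
  filter_upwards [hlim.eventually_le_const hε, eventually_gt_atTop 0] with H hHε hH
  filter_upwards [meanZero_iff.1 (meanZero_norm_sum_sq_sub (range H) hw) one_pos] with N hN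
  have hdiag : ∑ n ∈ range N, ∑ h ∈ range H, ‖w h n‖ ^ 2 ≤ N * (H * C ^ 2) := by
    calc ∑ n ∈ range N, ∑ h ∈ range H, ‖w h n‖ ^ 2
        ≤ ∑ _n ∈ range N, ∑ _h ∈ range H, C ^ 2 := by gcongr; exact hwC _ _
      _ = N * (H * C ^ 2) := by simp
  have hsum : ∑ n ∈ range N, ‖∑ h ∈ range H, w h n‖ ^ 2 ≤ (1 + H * C ^ 2) * N := by
    rw [sum_sub_distrib] at hN
    linarith [(le_abs_self _).trans hN]
  calc ∑ n ∈ range N, ‖(H : ℝ)⁻¹ • ∑ h ∈ range H, w h n‖ ^ 2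
      = (H : ℝ)⁻¹ ^ 2 * ∑ n ∈ range N, ‖∑ h ∈ range H, w h n‖ ^ 2 := by
        simp [norm_smul, mul_pow, mul_sum]
    _ ≤ (H : ℝ)⁻¹ ^ 2 * ((1 + H * C ^ 2) * N) := by gcongr
    _ = (H : ℝ)⁻¹ * ((H : ℝ)⁻¹ + C ^ 2) * N := by field_simp
    _ ≤ ε * N := by gcongr

/-- Van der Corput's difference theorem: `z` may be replaced in the mean by its average over `H`
consecutive shifts, and these shifts are pairwise orthogonal in the mean. -/
theorem meanZero_of_meanZero_inner_comp_add {z : ℕ → E} {C : ℝ} (hz : ∀ n, ‖z n‖ ≤ C)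
    (hcorr : ∀ h > 0, MeanZero fun n ↦ ⟪z n, z (n + h)⟫_ℝ) : MeanZero z := by
  have hlt : ∀ h k, h < k → MeanZero fun n ↦ ⟪z (n + h), z (n + k)⟫_ℝ := fun h k hk ↦ by
    simpa only [add_assoc, Nat.add_sub_cancel' hk.le] using
      (hcorr (k - h) (Nat.sub_pos_of_lt hk)).comp_add h
  have hpair : Pairwise fun h k ↦ MeanZero fun n ↦ ⟪z (n + h), z (n + k)⟫_ℝ := fun h k hne ↦ by
    rcases hne.lt_or_gt with hhk | hkh
    · exact hlt h k hhk
    · simpa only [real_inner_comm] using hlt k h hkh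
  refine meanZero_of_approx fun ε hε ↦ ?_
  obtain ⟨H, hH, hH0⟩ := ((eventually_sum_norm_average_sq_le (fun h n ↦ hz (n + h)) hpair
    (pow_pos hε 2)).and (eventually_gt_atTop 0)).exists
  have hsum : MeanZero fun n ↦ ∑ h ∈ range H, (z (n + h) - z n) :=
    .sum fun h _ ↦ meanZero_comp_add_sub hz h
  have hshift : MeanZero fun n ↦ (-(H : ℝ)⁻¹) • ∑ h ∈ range H, (z (n + h) - z n) :=
    hsum.map ((-(H : ℝ)⁻¹) • .id ℝ E)
  refine ⟨_, hshift, hH.mono fun N hN ↦ ?_⟩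
  refine le_of_eq_of_le (congrArg _ <| sum_congr rfl fun n _ ↦ ?_)
    (norm_sum_range_le_of_sum_norm_sq_le hε.le hN)
  rw [neg_smul, sum_sub_distrib, sum_const, card_range, smul_sub, ← Nat.cast_smul_eq_nsmul ℝ,
    inv_smul_smul₀ (by positivity)]
  abel

end VanDerCorput

/-! ### The character `e` -/

section Character

lemma eC_eq_fourierChar (x : ℝ) : eC x = 𝐞 x := by
  rw [eC, Real.fourierChar_apply]
  push_cast
  ring_nf

lemma norm_eC (x : ℝ) : ‖eC x‖ = 1 := by
  rw [eC_eq_fourierChar, Circle.norm_coe]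

lemma eC_add (x y : ℝ) : eC (x + y) = eC x * eC y := by
  simp only [eC_eq_fourierChar, AddChar.map_add_eq_mul, Circle.coe_mul]

lemma eC_intCast (k : ℤ) : eC k = 1 := by
  simpa [eC, mul_comm] using Complex.exp_int_mul_two_pi_mul_I k

@[fun_prop]
lemma continuous_eC : Continuous eC := by
  unfold eC
  fun_prop

lemma eC_zero : eC 0 = 1 := by
  simpa using eC_intCast 0

lemma inner_eC (x y : ℝ) : ⟪eC x, eC y⟫_ℝ = (eC (y - x)).re := by
  simp only [eC_eq_fourierChar, Complex.inner, sub_eq_neg_add, AddChar.map_add_eq_mul,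
    AddChar.map_neg_eq_inv, Circle.coe_mul, Circle.coe_inv_eq_conj, mul_comm]

lemma isTheta_eC_sub_one : (fun x ↦ eC x - 1) =Θ[𝓝 0] (fun x ↦ x) := by
  have hderiv : HasDerivAt eC (2 * Real.pi * Complex.I) 0 := by
    simpa [funext eC_eq_fourierChar] using Real.hasDerivAt_fourierChar 0
  have hsymm := (hderiv.isTheta_sub Complex.two_pi_I_ne_zero).isBigO_symm
  refine ⟨by simpa [eC_zero] using hderiv.isBigO_sub, ?_⟩
  simpa [Filter.prod_pure, Function.comp_def, eC_zero] using hsymm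

lemma isTheta_eC_sub {α : Type*} {l : Filter α} {x y : α → ℝ}
    (h : Tendsto (fun a ↦ x a - y a) l (𝓝 0)) :
    (fun a ↦ eC (x a) - eC (y a)) =Θ[l] (fun a ↦ x a - y a) := by
  have hone : (fun a ↦ eC (x a - y a) - 1) =Θ[l] (fun a ↦ x a - y a) :=
    ⟨isTheta_eC_sub_one.1.comp_tendsto h, isTheta_eC_sub_one.2.comp_tendsto h⟩
  refine IsTheta.trans (.of_norm_eventuallyEq_norm <| .of_forall fun a ↦ ?_) hone
  calc ‖eC (x a) - eC (y a)‖ = ‖eC (y a) * (eC (x a - y a) - 1)‖ := by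
        rw [mul_sub_one, ← eC_add, add_sub_cancel]
    _ = ‖eC (x a - y a) - 1‖ := by rw [norm_mul, norm_eC, one_mul]

/-- Here `e(u n) = (e(d n) - 1)⁻¹ (e(u (n + 1)) - e(u n))` with `d = Δ u`, which can be summed by
parts. -/
theorem meanZero_eC_of_slow {u : ℕ → ℝ} (hu : Tendsto (Δ_[1] u) atTop (𝓝 0))
    (hne : ∀ᶠ n in atTop, Δ_[1] u n ≠ 0)
    (hinv : Tendsto (Δ_[1] (Δ_[1] u)⁻¹) atTop (𝓝 0)) : MeanZero fun n ↦ eC (u n) := by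
  set d := Δ_[1] u
  have hshift := tendsto_add_atTop_nat 1
  have htheta : (fun n ↦ eC (d n) - 1) =Θ[atTop] d := by
    simpa [eC_zero] using isTheta_eC_sub (y := 0) (by simpa using hu)
  have hne' : ∀ᶠ n in atTop, eC (d n) - 1 ≠ 0 := by
    filter_upwards [hne, htheta.eq_zero_iff] with n hn h0 using mt h0.1 hn
  have hdiff : (fun n ↦ eC (d n) - eC (d (n + 1))) =O[atTop] (fun n ↦ d n - d (n + 1)) :=
    (isTheta_eC_sub (by simpa using hu.sub (hu.comp hshift))).1
  have hbigO : (Δ_[1] fun n ↦ (eC (d n) - 1)⁻¹) =O[atTop] Δ_[1] d⁻¹ := by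
    refine (((htheta.inv.1.comp_tendsto hshift).mul hdiff).mul htheta.inv.1).congr' ?_ ?_
    · filter_upwards [hne', hshift.eventually hne'] with n hn hn1
      simp [fwdDiff, inv_sub_inv' hn1 hn]
    · filter_upwards [hne, hshift.eventually hne] with n hn hn1
      simp [fwdDiff, inv_sub_inv' hn1 hn]
  refine (meanZero_mul_fwdDiff (fun n ↦ (norm_eC (u n)).le) (hbigO.trans_tendsto hinv)).congr' ?_
  filter_upwards [hne'] with n hn
  rw [inv_mul_eq_iff_eq_mul₀ hn, sub_one_mul, ← eC_add]
  simp [d, fwdDiff]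

end Character

/-! ### Sequences of power growth -/

section PowerLike

lemma tendsto_div_rpow_of_isEquivalent {α : Type*} {l : Filter α} {v x y : α → ℝ} {a L : ℝ}
    (hv : Tendsto (fun t ↦ v t / x t ^ a) l (𝓝 L)) (hxy : x ~[l] y) (hy : ∀ᶠ t in l, 0 < y t) :
    Tendsto (fun t ↦ v t / y t ^ a) l (𝓝 L) := by
  have hratio : Tendsto (x / y) l (𝓝 1) :=
    (isEquivalent_iff_tendsto_one (hy.mono fun _ ht ↦ ht.ne')).1 hxy
  have hprod := hv.mul (hratio.rpow_const (p := a) (.inl one_ne_zero))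
  rw [Real.one_rpow, mul_one] at hprod
  refine hprod.congr' ?_
  filter_upwards [hy, hxy.eventually_pos hy] with t hyt hxt
  rw [Pi.div_apply, Real.div_rpow hxt.le hyt.le,
    div_mul_div_cancel₀ (Real.rpow_pos_of_pos hxt a).ne']

lemma isEquivalent_natCast_add (j : ℕ) :
    (fun n : ℕ ↦ ((n + j : ℕ) : ℝ)) ~[atTop] (fun n ↦ (n : ℝ)) := by
  simp only [Nat.cast_add]
  exact IsEquivalent.refl.add_isLittleO (isLittleO_const_natCast (j : ℝ))

lemma eventually_natCast_pos : ∀ᶠ n : ℕ in atTop, (0 : ℝ) < n :=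
  (eventually_gt_atTop 0).mono fun _ hn ↦ Nat.cast_pos.2 hn

/-- The sequence `u` grows like `L n ^ c`, and so do its iterated differences: `Δᵏ u n` behaves like
`L c (c - 1) ⋯ (c - k + 1) n ^ (c - k)`. For `L = 0` this only says that `u` is of lower order. -/
def PowerLike (c L : ℝ) (u : ℕ → ℝ) : Prop :=
  ∀ k, Tendsto (fun n : ℕ ↦ Δ_[1] ^[k] u n / (n : ℝ) ^ (c - k)) atTop
    (𝓝 (L * ∏ j ∈ range k, (c - j)))

namespace PowerLike

variable {c L : ℝ} {u : ℕ → ℝ}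

lemma comp_add_sub (hu : PowerLike c L u) (h : ℕ) :
    PowerLike (c - 1) (h * (c * L)) fun n ↦ u (n + h) - u n := by
  intro k
  have htelescope : (fun n ↦ u (n + h) - u n) = ∑ j ∈ range h, fun n ↦ Δ_[1] u (n + j) := by
    funext n
    rw [Finset.sum_apply]
    exact (sum_range_sub (fun j ↦ u (n + j)) h).symm
  have hterm (j : ℕ) : Tendsto (fun n : ℕ ↦ Δ_[1] ^[k + 1] u (n + j) / (n : ℝ) ^ (c - 1 - k)) atTop
      (𝓝 (c * L * ∏ i ∈ range k, (c - 1 - i))) := by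
    have hk := (hu (k + 1)).comp (tendsto_add_atTop_nat j)
    simp only [prod_range_succ', Nat.cast_add_one, ← sub_sub, sub_right_comm c _ (1 : ℝ),
      Nat.cast_zero, sub_zero, mul_comm _ c, ← mul_assoc] at hk
    exact tendsto_div_rpow_of_isEquivalent hk (isEquivalent_natCast_add j) eventually_natCast_pos
  have hsum := tendsto_finsetSum (range h) fun j _ ↦ hterm j
  rw [sum_const, card_range, nsmul_eq_mul, ← mul_assoc] at hsum
  refine hsum.congr fun n ↦ ?_
  rw [htelescope, fwdDiff_iter_finsetSum, Finset.sum_apply, sum_div]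
  simp only [fwdDiff_iter_comp_add, Function.iterate_succ_apply]

lemma meanZero_of_lt_one (hu : PowerLike c L u) (hL : L ≠ 0) (hc : 0 < c) (hc1 : c < 1) :
    MeanZero fun n ↦ eC (u n) := by
  set d := Δ_[1] u
  have hd : Tendsto (fun n : ℕ ↦ d n / (n : ℝ) ^ (c - 1)) atTop (𝓝 (L * c)) := by
    simpa using hu 1
  have hpow_ne (a : ℝ) : ∀ᶠ n : ℕ in atTop, (n : ℝ) ^ a ≠ 0 :=
    eventually_natCast_pos.mono fun n hn ↦ (Real.rpow_pos_of_pos hn a).ne'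
  have hpow_zero {a : ℝ} (ha : 0 < a) : Tendsto (fun n : ℕ ↦ (n : ℝ) ^ (-a)) atTop (𝓝 0) :=
    (tendsto_rpow_neg_atTop ha).comp tendsto_natCast_atTop_atTop
  have htheta (j : ℕ) : (fun n ↦ d (n + j)) =Θ[atTop] (fun n : ℕ ↦ (n : ℝ) ^ (c - 1)) :=
    (isTheta_of_div_tendsto_nhds_ne_zero (tendsto_div_rpow_of_isEquivalent
      (hd.comp (tendsto_add_atTop_nat j)) (isEquivalent_natCast_add j) eventually_natCast_pos)
      (mul_ne_zero hL hc.ne')).symm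
  have hne (j : ℕ) : ∀ᶠ n in atTop, d (n + j) ≠ 0 := by
    filter_upwards [hpow_ne (c - 1), (htheta j).eq_zero_iff] with n hn h0 using mt h0.1 hn
  have hdd : (Δ_[1] d) =O[atTop] (fun n : ℕ ↦ (n : ℝ) ^ (c - 2)) :=
    isBigO_of_div_tendsto_nhds ((hpow_ne _).mono fun n hn h0 ↦ absurd h0 hn) _ (hu 2)
  have hinv : (Δ_[1] d⁻¹) =O[atTop] (fun n : ℕ ↦ (n : ℝ) ^ (-c)) := by
    refine (((htheta 1).inv.1.mul hdd).neg_left.mul (htheta 0).inv.1).congr' ?_ ?_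
    · filter_upwards [hne 0, hne 1] with n hn hn1
      rw [add_zero] at hn
      simp [fwdDiff, inv_sub_inv' hn1 hn, neg_mul_eq_mul_neg]
    · filter_upwards [eventually_natCast_pos] with n hn
      rw [← Real.rpow_neg hn.le, ← Real.rpow_add hn, ← Real.rpow_add hn]
      ring_nf
  refine meanZero_eC_of_slow ((htheta 0).1.trans_tendsto ?_) (hne 0)
    (hinv.trans_tendsto (hpow_zero hc))
  simpa using hpow_zero (sub_pos.2 hc1)

/-- Differencing lowers the exponent by one, so van der Corput's theorem reduces everything to
`0 < c < 1`. The factor `c` acquired by `L` at every step is nonzero as `c` is not an integer. -/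
theorem meanZero (hu : PowerLike c L u) (hL : L ≠ 0) (hc : 0 < c) (hint : ∀ k : ℤ, c ≠ k) :
    MeanZero fun n ↦ eC (u n) := by
  obtain ⟨K, hK⟩ := exists_nat_gt c
  induction K generalizing c L u with
  | zero => exact absurd hK (by simpa using hc.le)
  | succ K ih =>
    rcases lt_or_ge c 1 with hc1 | hc1
    · exact hu.meanZero_of_lt_one hL hc hc1
    · have hc1' : 1 < c := hc1.lt_of_ne fun h ↦ hint 1 (by simpa using h.symm)
      refine meanZero_of_meanZero_inner_comp_add (fun n ↦ (norm_eC _).le) fun h hh ↦ ?_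
      have hmean : MeanZero fun n ↦ eC (u (n + h) - u n) := by
        refine ih (hu.comp_add_sub h) (by positivity) (sub_pos.2 hc1') (fun k hk ↦ ?_) ?_
        · exact hint (k + 1) (by push_cast; linarith)
        · push_cast at hK; linarith
      simpa only [inner_eC, Complex.reCLM_apply] using hmean.map Complex.reCLM

lemma const_mul (hu : PowerLike c L u) (a : ℝ) : PowerLike c (a * L) fun n ↦ a * u n := by
  intro k
  have hsmul : (fun n ↦ a * u n) = a • u := rfl
  rw [hsmul, fwdDiff_iter_const_smul, mul_assoc]
  simpa only [Pi.smul_apply, smul_eq_mul, mul_div_assoc] using (hu k).const_mul a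

lemma of_lt {c' : ℝ} (hu : PowerLike c L u) (h : c < c') : PowerLike c' 0 u := by
  intro k
  have hpow : Tendsto (fun n : ℕ ↦ (n : ℝ) ^ (-(c' - c))) atTop (𝓝 0) :=
    (tendsto_rpow_neg_atTop (sub_pos.2 h)).comp tendsto_natCast_atTop_atTop
  have hprod := (hu k).mul hpow
  rw [mul_zero] at hprod
  rw [zero_mul]
  refine hprod.congr' ?_
  filter_upwards [eventually_natCast_pos] with n hn
  rw [div_eq_mul_inv, div_eq_mul_inv, mul_assoc, ← Real.rpow_neg hn.le, ← Real.rpow_neg hn.le,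
    ← Real.rpow_add hn]
  ring_nf

lemma sum {ι : Type*} {s : Finset ι} {c : ℝ} {L : ι → ℝ} {u : ι → ℕ → ℝ}
    (hu : ∀ i ∈ s, PowerLike c (L i) (u i)) :
    PowerLike c (∑ i ∈ s, L i) fun n ↦ ∑ i ∈ s, u i n := by
  intro k
  have := tendsto_finsetSum s fun i hi ↦ hu i hi k
  simpa only [← sum_fn, fwdDiff_iter_finsetSum, Finset.sum_apply, sum_mul, sum_div] using this

end PowerLike

end PowerLike

/-! ### Powers -/

section Rpow

lemma hasDerivAt_fwdDiff_iter {F : Type*} [NormedAddCommGroup F] [NormedSpace ℝ F] {f f' : ℝ → F}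
    {a : ℝ} (hf : ∀ t > a, HasDerivAt f (f' t) t) (k : ℕ) :
    ∀ t > a, HasDerivAt (Δ_[1] ^[k] f) (Δ_[1] ^[k] f' t) t := by
  induction k with
  | zero => exact hf
  | succ k ih =>
    intro t ht
    rw [Function.iterate_succ_apply', Function.iterate_succ_apply']
    exact ((ih (t + 1) (ht.trans (lt_add_one t))).comp_add_const t 1).sub (ih t ht)

lemma exists_fwdDiff_iter_succ_eq {f f' : ℝ → ℝ} {a : ℝ} (hf : ∀ t > a, HasDerivAt f (f' t) t)
    (k : ℕ) {t : ℝ} (ht : a < t) :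
    ∃ θ ∈ Set.Ioo t (t + 1), Δ_[1] ^[k + 1] f t = Δ_[1] ^[k] f' θ := by
  have hderiv := hasDerivAt_fwdDiff_iter hf k
  obtain ⟨θ, hθ, hslope⟩ := exists_hasDerivAt_eq_slope _ _ (lt_add_one t)
    (fun x hx ↦ (hderiv x (ht.trans_le hx.1)).continuousAt.continuousWithinAt)
    (fun x hx ↦ hderiv x (ht.trans hx.1))
  refine ⟨θ, hθ, ?_⟩
  rw [hslope, Function.iterate_succ_apply', fwdDiff, add_sub_cancel_left, div_one]

lemma tendsto_fwdDiff_iter_rpow (k : ℕ) (c : ℝ) :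
    Tendsto (fun t : ℝ ↦ Δ_[1] ^[k] (fun s ↦ s ^ c) t / t ^ (c - k)) atTop
      (𝓝 (∏ j ∈ range k, (c - j))) := by
  induction k generalizing c with
  | zero =>
    refine tendsto_const_nhds.congr' ?_
    filter_upwards [eventually_gt_atTop 0] with t ht
    simp [(Real.rpow_pos_of_pos ht c).ne']
  | succ k ih =>
    have hderiv : ∀ t > 0, HasDerivAt (fun s : ℝ ↦ s ^ c) (c * t ^ (c - 1)) t :=
      fun t ht ↦ Real.hasDerivAt_rpow_const (.inl ht.ne')
    choose! θ hθ hmvt using fun t ↦ exists_fwdDiff_iter_succ_eq hderiv k (t := t)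
    have hθ_sub : (θ - id) =O[atTop] (fun _ ↦ (1 : ℝ)) := by
      refine isBigO_iff.2 ⟨1, (eventually_gt_atTop 0).mono fun t ht ↦ ?_⟩
      rw [Pi.sub_apply, id, Real.norm_eq_abs, abs_le]
      constructor <;> norm_num <;> linarith [(hθ t ht).1, (hθ t ht).2]
    have hθ_equiv : θ ~[atTop] id := hθ_sub.trans_isLittleO (isLittleO_const_id_atTop 1)
    have hlim : Tendsto (fun t ↦ Δ_[1] ^[k] (fun s ↦ s ^ (c - 1)) (θ t) / t ^ (c - 1 - k)) atTop
        (𝓝 (∏ j ∈ range k, (c - 1 - j))) :=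
      tendsto_div_rpow_of_isEquivalent ((ih (c - 1)).comp (hθ_equiv.symm.tendsto_atTop tendsto_id))
        hθ_equiv (eventually_gt_atTop 0)
    simp only [prod_range_succ', Nat.cast_add_one, ← sub_sub, sub_right_comm c _ (1 : ℝ),
      Nat.cast_zero, sub_zero, mul_comm _ c]
    refine (hlim.const_mul c).congr' ((eventually_gt_atTop 0).mono fun t ht ↦ ?_)
    have hsmul : (fun s : ℝ ↦ c * s ^ (c - 1)) = c • fun s ↦ s ^ (c - 1) := rfl
    dsimp only
    rw [hmvt t ht, hsmul, fwdDiff_iter_const_smul, Pi.smul_apply, smul_eq_mul, mul_div_assoc]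

lemma fwdDiff_iter_comp_natCast {G : Type*} [AddCommGroup G] (f : ℝ → G) (k n : ℕ) :
    Δ_[1] ^[k] (fun n : ℕ ↦ f n) n = Δ_[1] ^[k] f n := by
  simp [fwdDiff_iter_eq_sum_shift]

lemma powerLike_rpow (c : ℝ) : PowerLike c 1 fun n ↦ (n : ℝ) ^ c := by
  intro k
  simpa only [Function.comp_def, one_mul, fwdDiff_iter_comp_natCast (· ^ c)] using
    (tendsto_fwdDiff_iter_rpow k c).comp tendsto_natCast_atTop_atTop

theorem meanZero_eC_sum_rpow {ι : Type*} [Fintype ι] {c η : ι → ℝ} (hpos : ∀ i, 0 < c i)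
    (hinj : Function.Injective c) (hint : ∀ i, ∀ k : ℤ, c i ≠ k) (hη : ∃ i, η i ≠ 0) :
    MeanZero fun n ↦ eC (∑ i, η i * (n : ℝ) ^ c i) := by
  classical
  obtain ⟨j, hj, hjmax⟩ : ∃ j, η j ≠ 0 ∧ ∀ i, η i ≠ 0 → c i ≤ c j := by
    simpa using exists_max_image {i | η i ≠ 0} c (by simpa [Finset.Nonempty] using hη)
  have hterm : ∀ i, PowerLike (c j) (if i = j then η i else 0) fun n ↦ η i * (n : ℝ) ^ c i := by
    intro i
    rcases eq_or_ne i j with rfl | hij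
    · simpa using (powerLike_rpow (c i)).const_mul (η i)
    · rcases eq_or_ne (η i) 0 with h0 | h0
      · simpa [h0] using (powerLike_rpow (c j)).const_mul 0
      · have hlt : c i < c j := (hjmax i h0).lt_of_ne (hinj.ne hij)
        simpa [hij] using ((powerLike_rpow (c i)).of_lt hlt).const_mul (η i)
  have hsum := PowerLike.sum (s := univ) fun i _ ↦ hterm i
  rw [sum_ite_eq' univ j η, if_pos (mem_univ j)] at hsum
  exact hsum.meanZero hj (hpos j) (hint j)

end Rpow

/-! ### Removing the floors -/

section Floor

lemma meanZero_continuousMap_mul {T C : ℝ} [Fact (0 < T)] {x : ℕ → AddCircle T} {R : ℕ → ℂ}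
    (hR : ∀ n, ‖R n‖ ≤ C) (h : ∀ k : ℤ, MeanZero fun n ↦ fourier k (x n) * R n)
    (b : C(AddCircle T, ℂ)) : MeanZero fun n ↦ b (x n) * R n := by
  refine meanZero_of_approx fun ε hε ↦ ?_
  obtain ⟨δ, hδ, hCδ⟩ := exists_pos_mul_lt hε C
  have hb : b ∈ (Submodule.span ℂ (Set.range (@fourier T))).topologicalClosure :=
    span_fourier_closure_eq_top (T := T) ▸ Submodule.mem_top
  obtain ⟨P, hP, hbP⟩ := Metric.mem_closure_iff.1 hb δ hδ
  refine ⟨fun n ↦ P (x n) * R n, ?_, .of_forall fun N ↦ ?_⟩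
  · clear hbP
    induction hP using Submodule.span_induction with
    | mem P hP => obtain ⟨k, rfl⟩ := hP; exact h k
    | zero => simpa using (h 0).const_mul 0
    | add P Q _ _ hP hQ => simpa only [ContinuousMap.add_apply, add_mul] using hP.add hQ
    | smul a P _ hP =>
      simpa only [ContinuousMap.smul_apply, smul_eq_mul, mul_assoc] using hP.const_mul a
  · calc ‖∑ n ∈ range N, (b (x n) * R n - P (x n) * R n)‖
        ≤ ∑ _n ∈ range N, δ * C := norm_sum_le_of_le _ fun n _ ↦ by
          rw [← sub_mul, norm_mul]
          exact mul_le_mul ((dist_eq_norm _ _).symm.trans_le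
            ((ContinuousMap.dist_apply_le_dist _).trans hbP.le)) (hR n) (norm_nonneg _) hδ.le
      _ = C * δ * N := by rw [sum_const, card_range, nsmul_eq_mul]; ring
      _ ≤ ε * N := by gcongr

/-- The sequence `x` is equidistributed modulo one, stated through Weyl's criterion. -/
def EquidistributedModOne (x : ℕ → ℝ) : Prop :=
  ∀ k : ℤ, k ≠ 0 → MeanZero fun n ↦ eC (k * x n)

lemma equidistributedModOne_rpow {c : ℝ} (hc : 0 < c) (hint : ∀ k : ℤ, c ≠ k) :
    EquidistributedModOne fun n ↦ (n : ℝ) ^ c := fun k hk ↦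
  ((powerLike_rpow c).const_mul k).meanZero (by simpa using hk) hc hint

/-- The normalized Fejér kernel. It equals `1` at the integers, while its mean along an
equidistributed sequence is small: multiplying by `1 - fejer M` removes jumps at the integers. -/
def fejer (M : ℕ) (x : ℝ) : ℝ :=
  ‖(M : ℝ)⁻¹ • ∑ j ∈ range M, eC (j * x)‖ ^ 2

lemma continuous_fejer (M : ℕ) : Continuous (fejer M) := by
  unfold fejer
  fun_prop

lemma fejer_intCast {M : ℕ} (hM : M ≠ 0) (k : ℤ) : fejer M k = 1 := by
  have hone (j : ℕ) : eC (j * k) = 1 := by exact_mod_cast eC_intCast (j * k)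
  simp [fejer, hone, hM]

lemma fejer_fract (M : ℕ) (x : ℝ) : fejer M (Int.fract x) = fejer M x := by
  have hfract (j : ℕ) : eC (j * Int.fract x) = eC (j * x) := by
    have hint : eC (j * ⌊x⌋) = 1 := by exact_mod_cast eC_intCast (j * ⌊x⌋)
    rw [← mul_one (eC (j * Int.fract x)), ← hint, ← eC_add, ← mul_add, Int.fract_add_floor]
  simp only [fejer, hfract]

lemma EquidistributedModOne.eventually_sum_fejer_le {x : ℕ → ℝ} (hx : EquidistributedModOne x)
    {ε : ℝ} (hε : 0 < ε) :
    ∀ᶠ M : ℕ in atTop, ∀ᶠ N : ℕ in atTop, ∑ n ∈ range N, fejer M (x n) ≤ ε * N := by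
  refine eventually_sum_norm_average_sq_le (w := fun j n ↦ eC (j * x n))
    (fun j n ↦ (norm_eC _).le) (fun h k hne ↦ ?_) hε
  have hmean := (hx (k - h) (by omega)).map Complex.reCLM
  simpa only [inner_eC, Complex.reCLM_apply, Int.cast_sub, Int.cast_natCast, sub_mul] using hmean

lemma exists_continuousMap_comp_fract {B : Type*} [TopologicalSpace B] {g : ℝ → B}
    (hg : ContinuousOn g (Set.Icc 0 1)) (h01 : g 0 = g 1) :
    ∃ b : C(UnitAddCircle, B), ∀ y : ℝ, b y = g (Int.fract y) := by
  refine ⟨⟨AddCircle.liftIco 1 0 g, AddCircle.liftIco_zero_continuous h01 hg⟩, fun y ↦ ?_⟩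
  rw [← AddCircle.coe_fract]
  exact AddCircle.liftIco_zero_coe_apply ⟨Int.fract_nonneg y, Int.fract_lt_one y⟩

lemma fourier_coe_eq_eC (k : ℤ) (x : ℝ) : fourier k (x : UnitAddCircle) = eC (k * x) := by
  simp [eC, mul_assoc]

lemma meanZero_comp_fract_mul {x : ℕ → ℝ} {R : ℕ → ℂ} {C : ℝ} {g : ℝ → ℂ}
    (hx : EquidistributedModOne x) (hR : ∀ n, ‖R n‖ ≤ C)
    (hxR : ∀ k : ℤ, MeanZero fun n ↦ eC (k * x n) * R n) (hg : ContinuousOn g (Set.Icc 0 1)) :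
    MeanZero fun n ↦ g (Int.fract (x n)) * R n := by
  refine meanZero_of_approx fun ε hε ↦ ?_
  obtain ⟨B, hB⟩ := isCompact_Icc.exists_bound_of_continuousOn hg
  have hB0 : 0 ≤ B := (norm_nonneg _).trans (hB 0 (by simp))
  have hC0 : 0 ≤ C := (norm_nonneg _).trans (hR 0)
  obtain ⟨δ, hδ, hBδ⟩ := exists_pos_mul_lt hε (B * C)
  obtain ⟨M, hM, hM0⟩ := ((hx.eventually_sum_fejer_le hδ).and (eventually_ne_atTop 0)).exists
  obtain ⟨b, hb⟩ : ∃ b : C(UnitAddCircle, ℂ), ∀ y : ℝ,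
      b y = (1 - fejer M (Int.fract y)) • g (Int.fract y) := by
    refine exists_continuousMap_comp_fract (g := fun y ↦ (1 - fejer M y) • g y) ?_ ?_
    · exact (continuous_const.sub (continuous_fejer M)).continuousOn.smul hg
    · have h0 : fejer M 0 = 1 := by exact_mod_cast fejer_intCast hM0 0
      have h1 : fejer M 1 = 1 := by exact_mod_cast fejer_intCast hM0 1
      simp [h0, h1]
  refine ⟨fun n ↦ b (x n) * R n, meanZero_continuousMap_mul hR (fun k ↦ ?_) b, ?_⟩
  · simpa only [fourier_coe_eq_eC] using hxR k
  · filter_upwards [hM] with N hN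
    have hterm (n : ℕ) :
        ‖g (Int.fract (x n)) * R n - b (x n) * R n‖ ≤ B * C * fejer M (x n) := by
      have hfejer : 0 ≤ fejer M (x n) := sq_nonneg _
      calc ‖g (Int.fract (x n)) * R n - b (x n) * R n‖
          = ‖g (Int.fract (x n))‖ * ‖R n‖ * fejer M (x n) := by
            rw [hb, fejer_fract, sub_smul, one_smul, sub_mul, sub_sub_cancel, smul_mul_assoc,
              norm_smul, norm_mul, Real.norm_of_nonneg hfejer, mul_comm]
        _ ≤ B * C * fejer M (x n) := by
            gcongr
            · exact hB _ ⟨Int.fract_nonneg _, (Int.fract_lt_one _).le⟩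
            · exact hR n
    calc ‖∑ n ∈ range N, (g (Int.fract (x n)) * R n - b (x n) * R n)‖
        ≤ B * C * ∑ n ∈ range N, fejer M (x n) := by
          rw [mul_sum]
          exact norm_sum_le_of_le _ fun n _ ↦ hterm n
      _ ≤ B * C * (δ * N) := by gcongr
      _ ≤ ε * N := by rw [← mul_assoc]; gcongr

/-- Here `e(ξ⌊x⌋) = e(-ξ{x}) e(ξx)`. -/
lemma meanZero_eC_mul_floor {x : ℕ → ℝ} {R : ℕ → ℂ} {C ξ : ℝ} (hx : EquidistributedModOne x)
    (hR : ∀ n, ‖R n‖ ≤ C) (hxR : ∀ k : ℤ, MeanZero fun n ↦ eC ((ξ + k) * x n) * R n) :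
    MeanZero fun n ↦ eC (ξ * ⌊x n⌋) * R n := by
  have hfloor (n : ℕ) : eC (ξ * ⌊x n⌋) * R n
      = eC (-ξ * Int.fract (x n)) * (eC (ξ * x n) * R n) := by
    rw [← mul_assoc, ← eC_add, Int.fract]
    ring_nf
  simp only [hfloor]
  refine meanZero_comp_fract_mul (C := C) (g := fun y ↦ eC (-ξ * y)) hx (fun n ↦ ?_) (fun k ↦ ?_)
    (by fun_prop)
  · simpa [norm_eC] using hR n
  · simpa only [← mul_assoc, ← eC_add, ← add_mul, add_comm ξ] using hxR k

lemma meanZero_eC_sum_floor_mul {ι : Type*} {x : ι → ℕ → ℝ} {ξ : ι → ℝ} {R : ℕ → ℂ} {C : ℝ}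
    {s : Finset ι} (hx : ∀ i ∈ s, EquidistributedModOne (x i)) (hR : ∀ n, ‖R n‖ ≤ C)
    (hxR : ∀ k : ι → ℤ, MeanZero fun n ↦ eC (∑ i ∈ s, (ξ i + k i) * x i n) * R n) :
    MeanZero fun n ↦ eC (∑ i ∈ s, ξ i * ⌊x i n⌋) * R n := by
  classical
  induction s using Finset.induction_on generalizing R with
  | empty => simpa using hxR 0
  | insert j s hj ih =>
    simp only [sum_insert hj, eC_add, mul_assoc, mul_left_comm (eC (ξ j * _))]
    refine ih (fun i hi ↦ hx i (mem_insert_of_mem hi)) (fun n ↦ ?_) fun k ↦ ?_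
    · simpa [norm_eC] using hR n
    simp only [mul_left_comm _ (eC (ξ j * _))]
    refine meanZero_eC_mul_floor (hx j (mem_insert_self j s)) (C := C) (fun n ↦ ?_) fun l ↦ ?_
    · simpa [norm_eC] using hR n
    have hupdate (n : ℕ) : ∑ i ∈ s, (ξ i + Function.update k j l i) * x i n
        = ∑ i ∈ s, (ξ i + k i) * x i n :=
      sum_congr rfl fun i hi ↦ by rw [Function.update_of_ne (ne_of_mem_of_not_mem hi hj)]
    simpa only [sum_insert hj, hupdate, Function.update_self, eC_add, mul_assoc] using
      hxR (Function.update k j l)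

theorem meanZero_eC_sum_floor_rpow {ι : Type*} [Fintype ι] {c ξ : ι → ℝ} (hpos : ∀ i, 0 < c i)
    (hinj : Function.Injective c) (hint : ∀ i, ∀ k : ℤ, c i ≠ k) (hξ : ∃ i, ∀ k : ℤ, ξ i ≠ k) :
    MeanZero fun n ↦ eC (∑ i, ξ i * ⌊(n : ℝ) ^ c i⌋) := by
  obtain ⟨i, hi⟩ := hξ
  have hweyl (k : ι → ℤ) : MeanZero fun n ↦ eC (∑ i, (ξ i + k i) * (n : ℝ) ^ c i) * 1 := by
    simp only [mul_one]
    refine meanZero_eC_sum_rpow hpos hinj hint ⟨i, fun h ↦ hi (-k i) ?_⟩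
    simpa using eq_neg_of_add_eq_zero_left h
  simpa only [mul_one] using meanZero_eC_sum_floor_mul (C := 1) (s := univ)
    (fun i _ ↦ equidistributedModOne_rpow (hpos i) (hint i)) (by simp) hweyl

end Floor

lemma exists_int_eq_iff_eq_zero {x : ℝ} (hx : x ∈ Set.Ico (-(1 / 2) : ℝ) (1 / 2)) :
    (∃ k : ℤ, x = k) ↔ x = 0 := by
  refine ⟨?_, fun h ↦ ⟨0, by simpa using h⟩⟩
  rintro ⟨k, rfl⟩
  have hlt : |(k : ℝ)| < 1 := abs_lt.2 ⟨by linarith [hx.1], by linarith [hx.2]⟩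
  exact_mod_cast Int.abs_lt_one_iff.1 (by exact_mod_cast hlt)

open scoped Classical in
theorem stmt8_general {ι : Type*} [Fintype ι] {c : ι → ℝ} (hpos : ∀ i, 0 < c i)
    (hinj : Function.Injective c) (hint : ∀ i, ∀ k : ℤ, c i ≠ k) (ξ : ι → ℝ) :
    Tendsto (fun N : ℕ ↦ (N : ℂ)⁻¹ * ∑ n ∈ Icc 1 N, eC (∑ i, ξ i * ⌊(n : ℝ) ^ c i⌋)) atTop
      (𝓝 (if ∀ i, ∃ k : ℤ, ξ i = k then 1 else 0)) := by
  split_ifs with hξ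
  · choose k hk using hξ
    have hone (n : ℕ) : eC (∑ i, ξ i * ⌊(n : ℝ) ^ c i⌋) = 1 := by
      simpa [hk] using eC_intCast (∑ i, k i * ⌊(n : ℝ) ^ c i⌋)
    refine tendsto_const_nhds.congr' ?_
    filter_upwards [eventually_ne_atTop 0] with N hN
    simp [hone, hN]
  · push Not at hξ
    exact (meanZero_eC_sum_floor_rpow hpos hinj hint hξ).tendsto_average

open scoped Classical in
/-- limit of the exponential sums: for non-integer
`0 < c₁ < ⋯ < c_m` and `(ξ₁,…,ξ_m) ∈ [−1/2,1/2)^m`,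
`(1/N) ∑_{n=1}^N e(ξ₁⌊n^{c₁}⌋+⋯+ξ_m⌊n^{c_m}⌋)` converges to `1` if all
`ξ_i = 0` and to `0` otherwise. -/
theorem stmt8 {m : ℕ} (hm : 0 < m) (c : Fin m → ℝ)
    (hpos : ∀ i, 0 < c i) (hmono : StrictMono c)
    (hint : ∀ i, ∀ k : ℤ, c i ≠ (k : ℝ))
    (ξ : Fin m → ℝ) (hξ : ∀ i, ξ i ∈ Set.Ico (-(1/2) : ℝ) (1/2)) :
    Tendsto (fun N : ℕ => expSum m c ξ N) atTop
      (nhds (if ∀ i, ξ i = 0 then (1 : ℂ) else 0)) := by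
  simpa only [expSum, exists_int_eq_iff_eq_zero (hξ _)] using
    stmt8_general hpos hmono.injective hint ξ

end
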